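/- arXiv:1103.1469 — 3 statements merged into one kernel-verified Lean document; each statement's English description precedes it below -/
import Mathlib

section
/- Let D ⊆ ℝⁿ be a nonempty open connected set, let v = (v', v_{n+1}) ∈ ℝⁿ × ℝ, and let f₁, f₂ : D → ℝ be smooth solutions of the translator equation with velocity v on D. If the function f₂ − f₁ attains its infimum over D at some point of D, then f₂ − f₁ is constant on D. -/
open scoped RealInnerProductSpace

/-- The Hessian of `f` at `x`, applied to the vector `ξ` (i.e. `(D²f(x))ξ`). -/
noncomputable def hess {n : ℕ} (f : EuclideanSpace ℝ (Fin n) → ℝ)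
    (x ξ : EuclideanSpace ℝ (Fin n)) : EuclideanSpace ℝ (Fin n) :=
  fderiv ℝ (gradient f) x ξ

/-- The Laplacian of `f` at `x`, as the trace of the Hessian. -/
noncomputable def lap {n : ℕ} (f : EuclideanSpace ℝ (Fin n) → ℝ)
    (x : EuclideanSpace ℝ (Fin n)) : ℝ :=
  ∑ i, ⟪hess f x (EuclideanSpace.single i 1), EuclideanSpace.single i 1⟫

/-- `f` satisfies the translator equation with velocity `(v', vn) ∈ ℝⁿ × ℝ` at the point `x`:
`(1 + |∇f|²)·Δf − ⟨∇f, (D²f)∇f⟩ = (v_{n+1} − ⟨v', ∇f⟩)·(1 + |∇f|²)`. -/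
def TranslatorEqAt {n : ℕ} (f : EuclideanSpace ℝ (Fin n) → ℝ)
    (v' : EuclideanSpace ℝ (Fin n)) (vn : ℝ) (x : EuclideanSpace ℝ (Fin n)) : Prop :=
  (1 + ‖gradient f x‖ ^ 2) * lap f x - ⟪gradient f x, hess f x (gradient f x)⟫
    = (vn - ⟪v', gradient f x⟫) * (1 + ‖gradient f x‖ ^ 2)

/-!
The difference `u = f₂ - f₁` satisfies a linear elliptic inequality `L u = tr (a D²u) + ⟪b, ∇u⟫ ≤ 0`
whose coefficients are continuous: `a = (1 + |∇f₂|²) I - ∇f₂ ⊗ ∇f₂`, and the remaining terms factor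
through `∇f₂ - ∇f₁` because they are polynomial in the gradient. The theorem is therefore Hopf's
strong minimum principle. If `u` were not constant, some ball in `D` would meet the minimum set of
`u` in exactly one boundary point `x₀`. A Gaussian `w` centred at the centre of that ball satisfies
`L w > 0` near `x₀` as soon as it is steep enough. For small amplitude, `u - w` has a local minimum
near `x₀`, where the second derivative test gives `L u ≥ L w > 0`.
-/

open Filter Topology Metric Set
open scoped Gradient

section InteriorBall

/-- Around a point `y ∉ C` take the largest ball avoiding `C`; halving it towards a nearest point
`x ∈ C` leaves `x` as the only contact point, by strict convexity. -/
lemma exists_closedBall_inter_eq_singleton {E : Type*} [NormedAddCommGroup E] [NormedSpace ℝ E]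
    [StrictConvexSpace ℝ E] [ProperSpace E] {C : Set E} (hC : IsClosed C) (hne : C.Nonempty)
    {y : E} (hy : y ∉ C) :
    ∃ x ∈ C, ∃ z ≠ x, closedBall z (dist x z) ⊆ closedBall y (infDist y C) ∧
      C ∩ closedBall z (dist x z) = {x} := by
  obtain ⟨x, hxC, hx⟩ := hC.exists_infDist_eq_dist hne y
  have hxy : x ≠ y := fun h => hy (h ▸ hxC)
  have hz : dist x (midpoint ℝ x y) = dist x y / 2 := by
    rw [dist_left_midpoint, Real.norm_ofNat]; ring
  have hzy : dist (midpoint ℝ x y) y = dist x y / 2 := by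
    rw [dist_midpoint_right, Real.norm_ofNat]; ring
  have hsub : closedBall (midpoint ℝ x y) (dist x (midpoint ℝ x y)) ⊆
      closedBall y (infDist y C) := by
    refine closedBall_subset_closedBall' ?_
    rw [hz, hzy, hx, dist_comm y x, add_halves]
  refine ⟨x, hxC, midpoint ℝ x y, ?_, hsub, ?_⟩
  · rwa [Ne, midpoint_eq_left_iff]
  refine Subset.antisymm (fun w ⟨hwC, hw⟩ => ?_) (by simp [hxC])
  have hwy : dist w y = dist x y := by
    refine le_antisymm ?_ ?_
    · simpa [hx, dist_comm y x] using hsub hw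
    · simpa [hx, dist_comm] using infDist_le_dist_of_mem (x := y) hwC
  rw [mem_closedBall, hz] at hw
  have hwz : dist w (midpoint ℝ x y) = dist w y / 2 := by
    linarith [dist_triangle w (midpoint ℝ x y) y]
  have hmid : midpoint ℝ x y = midpoint ℝ w y :=
    eq_midpoint_of_dist_eq_half hwz (by rw [hzy, hwy])
  simpa [midpoint_eq_midpoint_iff_vsub_eq_vsub, sub_eq_zero, eq_comm] using hmid

lemma exists_closedBall_subset_inter_eq_singleton {E : Type*} [NormedAddCommGroup E]
    [NormedSpace ℝ E] [StrictConvexSpace ℝ E] [ProperSpace E] {C D : Set E} (hC : IsClosed C)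
    (hD : IsOpen D) (hDc : IsPreconnected D) (hne : (D ∩ C).Nonempty) (hDC : ¬ D ⊆ C) :
    ∃ x z, z ≠ x ∧ closedBall z (dist x z) ⊆ D ∧ C ∩ closedBall z (dist x z) = {x} := by
  obtain ⟨p, ⟨hpD, hpC⟩, hp⟩ : ∃ p ∈ D ∩ C, p ∉ interior C := by
    by_contra! hint
    refine hDC ((hDc.subset_of_closure_inter_subset isOpen_interior ?_ ?_).trans interior_subset)
    · exact hne.mono fun x hx => ⟨hx.1, hint x hx⟩
    · exact fun x hx => hint x ⟨hx.2, closure_minimal interior_subset hC hx.1⟩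
  obtain ⟨r, hr, hrD⟩ := Metric.isOpen_iff.mp hD p hpD
  obtain ⟨y, hyp, hyC⟩ : ∃ y ∈ ball p (r / 2), y ∉ C := by
    by_contra! hsub
    exact hp (interior_maximal hsub isOpen_ball (mem_ball_self (by positivity)))
  obtain ⟨x, -, z, hzx, hsub, hinter⟩ := exists_closedBall_inter_eq_singleton hC ⟨p, hpC⟩ hyC
  refine ⟨x, z, hzx, hsub.trans (Subset.trans (fun w hw => mem_ball.mpr ?_) hrD), hinter⟩
  linarith [dist_triangle w y p, mem_ball.mp hyp, mem_closedBall.mp hw,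
    infDist_le_dist_of_mem (x := y) hpC]

end InteriorBall

section Gradient

variable {F : Type*} [NormedAddCommGroup F] [InnerProductSpace ℝ F] [CompleteSpace F]
  {u w : F → ℝ} {x : F}

lemma contDiffAt_gradient {m n : WithTop ℕ∞} (hu : ContDiffAt ℝ n u x) (hmn : m + 1 ≤ n) :
    ContDiffAt ℝ m (∇ u) x :=
  (InnerProductSpace.toDual ℝ F).symm.contDiff.contDiffAt.comp x (hu.fderiv_right hmn)

lemma differentiableAt_gradient (hu : ContDiffAt ℝ 2 u x) : DifferentiableAt ℝ (∇ u) x :=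
  (contDiffAt_gradient (m := 1) hu (by norm_num)).differentiableAt one_ne_zero

lemma gradient_fun_sub (hu : DifferentiableAt ℝ u x) (hw : DifferentiableAt ℝ w x) :
    ∇ (fun x => u x - w x) x = ∇ u x - ∇ w x := by
  simp only [gradient, fderiv_fun_sub hu hw, map_sub]

lemma fderiv_gradient_fun_sub (hu : ContDiffAt ℝ 2 u x) (hw : ContDiffAt ℝ 2 w x) :
    fderiv ℝ (∇ fun x => u x - w x) x = fderiv ℝ (∇ u) x - fderiv ℝ (∇ w) x := by
  have hsub : (∇ fun x => u x - w x) =ᶠ[𝓝 x] fun x => ∇ u x - ∇ w x := by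
    filter_upwards [hu.eventually (by simp), hw.eventually (by simp)] with z hz hz'
    exact gradient_fun_sub (hz.differentiableAt two_ne_zero) (hz'.differentiableAt two_ne_zero)
  rw [hsub.fderiv_eq,
    fderiv_fun_sub (differentiableAt_gradient hu) (differentiableAt_gradient hw)]

lemma deriv_deriv_nonneg_of_isLocalMin {f : ℝ → ℝ} {t : ℝ} (hmin : IsLocalMin f t)
    (hf : ContinuousAt f t) : 0 ≤ deriv (deriv f) t := by
  by_contra! hneg
  have hmax := isLocalMax_of_deriv_deriv_neg hneg hmin.deriv_eq_zero hf
  have hconst : f =ᶠ[𝓝 t] fun _ => f t := (hmin.and hmax).mono fun s hs => le_antisymm hs.2 hs.1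
  have hzero : deriv (deriv f) t = 0 := by
    rw [hconst.deriv.deriv_eq]
    simp
  exact hneg.ne hzero

lemma deriv_deriv_comp_add_smul (hu : ContDiffAt ℝ 2 u x) (ξ : F) :
    deriv (deriv fun t : ℝ => u (x + t • ξ)) 0 = ⟪fderiv ℝ (∇ u) x ξ, ξ⟫ := by
  have hline (t : ℝ) : HasDerivAt (fun t : ℝ => x + t • ξ) ξ t := by
    simpa using ((hasDerivAt_id t).smul_const ξ).const_add x
  have hlim : Tendsto (fun t : ℝ => x + t • ξ) (𝓝 0) (𝓝 x) := by
    simpa using (hline 0).continuousAt.tendsto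
  have hfst : deriv (fun t : ℝ => u (x + t • ξ)) =ᶠ[𝓝 0] fun t => ⟪∇ u (x + t • ξ), ξ⟫ := by
    filter_upwards [hlim.eventually (hu.eventually (by simp))] with t ht
    rw [inner_gradient_left]
    exact ((ht.differentiableAt two_ne_zero).hasFDerivAt.comp_hasDerivAt t (hline t)).deriv
  have hsnd : HasDerivAt (fun t : ℝ => ∇ u (x + t • ξ)) (fderiv ℝ (∇ u) x ξ) 0 :=
    (differentiableAt_gradient hu).hasFDerivAt.comp_hasDerivAt_of_eq 0 (hline 0) (by simp)
  rw [hfst.deriv_eq]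
  simpa using (hsnd.inner ℝ (hasDerivAt_const 0 ξ)).deriv

lemma inner_fderiv_gradient_nonneg_of_isLocalMin (hu : ContDiffAt ℝ 2 u x)
    (hmin : IsLocalMin u x) (ξ : F) : 0 ≤ ⟪fderiv ℝ (∇ u) x ξ, ξ⟫ := by
  rw [← deriv_deriv_comp_add_smul hu]
  have hline : ContinuousAt (fun t : ℝ => x + t • ξ) 0 := by fun_prop
  apply deriv_deriv_nonneg_of_isLocalMin
  · exact IsLocalMin.comp_continuous (g := fun t : ℝ => x + t • ξ) (by simpa using hmin) hline
  · exact ContinuousAt.comp (g := u) (by simpa using hu.continuousAt) hline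

end Gradient

section SecondOrderOp

variable {F : Type*} [NormedAddCommGroup F] [InnerProductSpace ℝ F] [FiniteDimensional ℝ F]
  {a : F → F →L[ℝ] F} {b : F → F} {u w : F → ℝ} {x : F}

lemma continuous_trace : Continuous fun A : F →L[ℝ] F => LinearMap.trace ℝ F A :=
  (LinearMap.trace ℝ F ∘ₗ ContinuousLinearMap.coeLM ℝ).continuous_of_finiteDimensional

lemma trace_comp_nonneg_of_isPositive {A B : F →L[ℝ] F} (hA : A.IsPositive)
    (hB : ∀ ξ, 0 ≤ ⟪B ξ, ξ⟫) : 0 ≤ LinearMap.trace ℝ F (A ∘L B) := by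
  obtain ⟨n, e, rfl⟩ := ContinuousLinearMap.isPositive_iff_eq_sum_rankOne.mp hA
  simp only [ContinuousLinearMap.finsetSum_comp, InnerProductSpace.rankOne_comp,
    ContinuousLinearMap.toLinearMap_sum, map_sum, InnerProductSpace.trace_rankOne,
    ContinuousLinearMap.adjoint_inner_left]
  exact Finset.sum_nonneg fun i _ => real_inner_comm (e i) _ ▸ hB (e i)

/-- The linear second order operator `u ↦ tr (a D²u) + ⟪b, ∇u⟫` in nondivergence form, with the
Hessian encoded as the derivative of the gradient. -/
noncomputable def secondOrderOp (a : F → F →L[ℝ] F) (b : F → F) (u : F → ℝ) (x : F) : ℝ :=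
  LinearMap.trace ℝ F (a x ∘L fderiv ℝ (∇ u) x) + ⟪b x, ∇ u x⟫

lemma secondOrderOp_fun_sub (hu : ContDiffAt ℝ 2 u x) (hw : ContDiffAt ℝ 2 w x) :
    secondOrderOp a b (fun x => u x - w x) x = secondOrderOp a b u x - secondOrderOp a b w x := by
  simp only [secondOrderOp, fderiv_gradient_fun_sub hu hw,
    gradient_fun_sub (hu.differentiableAt two_ne_zero) (hw.differentiableAt two_ne_zero),
    ContinuousLinearMap.comp_sub, ContinuousLinearMap.toLinearMap_sub, map_sub, inner_sub_right]
  ring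

lemma secondOrderOp_nonneg_of_isLocalMin (ha : (a x).IsPositive) (hu : ContDiffAt ℝ 2 u x)
    (hmin : IsLocalMin u x) : 0 ≤ secondOrderOp a b u x := by
  have hgrad : ∇ u x = 0 := by simp [gradient, hmin.fderiv_eq_zero]
  rw [secondOrderOp, hgrad, inner_zero_right, add_zero]
  exact trace_comp_nonneg_of_isPositive ha (inner_fderiv_gradient_nonneg_of_isLocalMin hu hmin)

end SecondOrderOp

section Gaussian

variable {F : Type*} [NormedAddCommGroup F]

/-- The Gaussian of amplitude `ε`, rate `α` and centre `y`, used as the barrier in Hopf's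
argument. -/
noncomputable def gaussianBarrier (ε α : ℝ) (y x : F) : ℝ :=
  ε * Real.exp (-α * ‖x - y‖ ^ 2)

lemma gaussianBarrier_pos {ε : ℝ} (hε : 0 < ε) (α : ℝ) (y x : F) :
    0 < gaussianBarrier ε α y x := by
  unfold gaussianBarrier
  positivity

lemma gaussianBarrier_le {ε α : ℝ} (hε : 0 ≤ ε) (hα : 0 ≤ α) (y x : F) :
    gaussianBarrier ε α y x ≤ ε := by
  refine mul_le_of_le_one_right hε (Real.exp_le_one_iff.mpr ?_)
  rw [neg_mul, neg_nonpos]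
  positivity

lemma gaussianBarrier_lt_of_dist_lt {ε α : ℝ} (hε : 0 < ε) (hα : 0 < α) {x y z : F}
    (h : dist x y < dist z y) : gaussianBarrier ε α y z < gaussianBarrier ε α y x := by
  rw [dist_eq_norm, dist_eq_norm] at h
  simp only [gaussianBarrier, neg_mul]
  gcongr

variable [InnerProductSpace ℝ F]

lemma contDiff_gaussianBarrier {n : WithTop ℕ∞} (ε α : ℝ) (y : F) :
    ContDiff ℝ n (gaussianBarrier ε α y) := by
  unfold gaussianBarrier
  have hnorm : ContDiff ℝ n fun x : F => ‖x - y‖ ^ 2 := (contDiff_id.sub contDiff_const).norm_sq ℝ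
  fun_prop

lemma gradient_gaussianBarrier [CompleteSpace F] (ε α : ℝ) (y : F) :
    ∇ (gaussianBarrier ε α y) = fun x => -(2 * α * gaussianBarrier ε α y x) • (x - y) := by
  refine gradient_eq fun x => ?_
  rw [hasGradientAt_iff_hasFDerivAt]
  have h := (((((hasFDerivAt_id (𝕜 := ℝ) x).sub_const y).norm_sq).const_mul (-α)).exp).const_mul ε
  refine h.congr_fderiv ?_
  ext ξ
  simp only [gaussianBarrier, id_eq, map_smul, InnerProductSpace.toDual_apply_apply, smul_apply,
    ContinuousLinearMap.comp_id, coe_innerSL_apply, nsmul_eq_mul, Nat.cast_ofNat, smul_eq_mul]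
  ring

lemma fderiv_gradient_gaussianBarrier [CompleteSpace F] (ε α : ℝ) (y x : F) :
    fderiv ℝ (∇ (gaussianBarrier ε α y)) x = (2 * α * gaussianBarrier ε α y x) •
      ((2 * α) • InnerProductSpace.rankOne ℝ (x - y) (x - y) - ContinuousLinearMap.id ℝ F) := by
  have hw : HasFDerivAt (gaussianBarrier ε α y) _ x :=
    ((contDiff_gaussianBarrier (n := 1) ε α y).differentiable one_ne_zero x).hasFDerivAt
  have hd := (hasFDerivAt_id (𝕜 := ℝ) x).sub_const y
  rw [gradient_gaussianBarrier]
  refine ((hw.const_mul (2 * α)).neg.smul hd).fderiv.trans ?_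
  ext ξ
  have hξ : fderiv ℝ (gaussianBarrier ε α y) x ξ
      = -(2 * α * gaussianBarrier ε α y x) * ⟪x - y, ξ⟫ := by
    rw [← inner_gradient_left, gradient_gaussianBarrier, real_inner_smul_left]
  simp only [hξ, Pi.neg_apply, id_eq, add_apply, sub_apply, neg_apply, smul_apply, smul_eq_mul,
    ContinuousLinearMap.id_apply, ContinuousLinearMap.smulRight_apply,
    InnerProductSpace.rankOne_apply]
  module

variable [FiniteDimensional ℝ F]

lemma secondOrderOp_gaussianBarrier (a : F → F →L[ℝ] F) (b : F → F) (ε α : ℝ) (y x : F) :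
    secondOrderOp a b (gaussianBarrier ε α y) x = 2 * α * gaussianBarrier ε α y x *
      (2 * α * ⟪a x (x - y), x - y⟫ - LinearMap.trace ℝ F (a x) - ⟪b x, x - y⟫) := by
  rw [secondOrderOp, fderiv_gradient_gaussianBarrier, gradient_gaussianBarrier]
  beta_reduce
  generalize x - y = d
  simp only [ContinuousLinearMap.comp_smul, ContinuousLinearMap.comp_sub,
    InnerProductSpace.comp_rankOne, ContinuousLinearMap.comp_id,
    ContinuousLinearMap.toLinearMap_smul, ContinuousLinearMap.toLinearMap_sub, map_smul, map_sub,
    InnerProductSpace.trace_rankOne, inner_smul_right, smul_eq_mul,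
    real_inner_comm (a x d)]
  ring

lemma exists_eventually_secondOrderOp_gaussianBarrier_pos {a : F → F →L[ℝ] F} {b : F → F}
    {x₀ y : F} (ha : ContinuousAt a x₀) (hb : ContinuousAt b x₀)
    (hpos : 0 < ⟪a x₀ (x₀ - y), x₀ - y⟫) :
    ∃ α > 0, ∀ᶠ x in 𝓝 x₀, ∀ ε > 0, 0 < secondOrderOp a b (gaussianBarrier ε α y) x := by
  obtain ⟨α, hα⟩ := exists_gt (max 0
    ((LinearMap.trace ℝ F (a x₀) + ⟪b x₀, x₀ - y⟫) / (2 * ⟪a x₀ (x₀ - y), x₀ - y⟫)))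
  rw [max_lt_iff, div_lt_iff₀ (by positivity)] at hα
  refine ⟨α, hα.1, ?_⟩
  have htrace : ContinuousAt (fun x => LinearMap.trace ℝ F (a x)) x₀ :=
    continuous_trace.continuousAt.comp ha
  have hcont : ContinuousAt (fun x => 2 * α * ⟪a x (x - y), x - y⟫ - LinearMap.trace ℝ F (a x)
      - ⟪b x, x - y⟫) x₀ := by fun_prop
  have hx₀ : 0 < 2 * α * ⟪a x₀ (x₀ - y), x₀ - y⟫ - LinearMap.trace ℝ F (a x₀)
      - ⟪b x₀, x₀ - y⟫ := by
    linarith [hα.2]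
  filter_upwards [hcont.tendsto.eventually_const_lt hx₀] with x hx ε hε
  rw [secondOrderOp_gaussianBarrier]
  exact mul_pos (mul_pos (mul_pos two_pos hα.1) (gaussianBarrier_pos hε α y x)) hx

/-- Outside the ball around `y` the barrier is below its value at `x₀`, and on the part of the
sphere inside that ball `u` exceeds its minimum by a definite amount. -/
lemma exists_isLocalMin_sub_gaussianBarrier {u : F → ℝ} {x₀ y : F} {α δ : ℝ} (hα : 0 < α)
    (hδ : 0 < δ) (hu : ContinuousOn u (closedBall x₀ δ)) (hmin : IsMinOn u (closedBall x₀ δ) x₀)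
    (hlt : ∀ x ∈ sphere x₀ δ ∩ closedBall y (dist x₀ y), u x₀ < u x) :
    ∃ ε > 0, ∃ x ∈ ball x₀ δ, IsLocalMin (fun x => u x - gaussianBarrier ε α y x) x := by
  obtain ⟨m, hm, hle⟩ := ((isCompact_sphere x₀ δ).inter_right isClosed_closedBall).exists_forall_le'
    (hu.mono (inter_subset_left.trans sphere_subset_closedBall)) hlt
  have hε : 0 < m - u x₀ := sub_pos.mpr hm
  have hw : Continuous (gaussianBarrier (m - u x₀) α y) :=
    (contDiff_gaussianBarrier (n := 0) _ _ _).continuous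
  refine ⟨m - u x₀, hε, (isCompact_closedBall x₀ δ).exists_isLocalMin_mem_open
    ball_subset_closedBall (hu.sub hw.continuousOn)
    (mem_closedBall_self hδ.le) (fun x hx => ?_) isOpen_ball⟩
  rw [closedBall_sdiff_ball] at hx
  rcases le_or_gt (dist x y) (dist x₀ y) with hin | hout
  · linarith [hle x ⟨hx, hin⟩, gaussianBarrier_le hε.le hα.le y x, gaussianBarrier_pos hε α y x₀]
  · have hux : u x₀ ≤ u x := hmin (sphere_subset_closedBall hx)
    linarith [gaussianBarrier_lt_of_dist_lt hε hα hout]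

end Gaussian

section StrongMinimum

variable {F : Type*} [NormedAddCommGroup F] [InnerProductSpace ℝ F] [FiniteDimensional ℝ F]
  {a : F → F →L[ℝ] F} {b : F → F} {u : F → ℝ}

lemma exists_ne_eq_of_isLocalMin_of_secondOrderOp_nonpos {x₀ y : F} (hu : ContDiffAt ℝ 2 u x₀)
    (hac : ContinuousAt a x₀) (hbc : ContinuousAt b x₀) (ha : ∀ᶠ x in 𝓝 x₀, (a x).IsPositive)
    (hpos : 0 < ⟪a x₀ (x₀ - y), x₀ - y⟫) (hLu : ∀ᶠ x in 𝓝 x₀, secondOrderOp a b u x ≤ 0)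
    (hmin : IsLocalMin u x₀) :
    ∃ x ∈ closedBall y (dist x₀ y), x ≠ x₀ ∧ u x = u x₀ := by
  by_contra! hne
  obtain ⟨α, hα, hLw⟩ := exists_eventually_secondOrderOp_gaussianBarrier_pos hac hbc hpos
  obtain ⟨δ, hδ, hball⟩ := nhds_basis_closedBall.eventually_iff.mp
    ((hu.eventually (by simp)).and (ha.and (hLu.and (hLw.and hmin))))
  obtain ⟨ε, hε, x, hx, hxmin⟩ := exists_isLocalMin_sub_gaussianBarrier (u := u) (y := y) hα hδ
    (fun x hx => (hball hx).1.continuousAt.continuousWithinAt) (fun x hx => (hball hx).2.2.2.2)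
    fun x hx => (hball (sphere_subset_closedBall hx.1)).2.2.2.2.lt_of_ne'
      (hne x hx.2 (ne_of_mem_sphere hx.1 hδ.ne'))
  obtain ⟨hux, hax, hLux, hLwx, -⟩ := hball (ball_subset_closedBall hx)
  have hw := (contDiff_gaussianBarrier (n := 2) ε α y).contDiffAt (x := x)
  have hL := secondOrderOp_nonneg_of_isLocalMin (b := b) hax (hux.sub hw) hxmin
  rw [secondOrderOp_fun_sub hux hw] at hL
  linarith [hLwx ε hε]

theorem eqOn_of_isMinOn_of_secondOrderOp_nonpos {D : Set F} (hD : IsOpen D)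
    (hDc : IsPreconnected D) (hu : ContDiffOn ℝ 2 u D) (hac : ContinuousOn a D)
    (hbc : ContinuousOn b D) (hsymm : ∀ x ∈ D, (a x).IsSymmetric)
    (hpos : ∀ x ∈ D, ∀ ξ ≠ 0, 0 < ⟪a x ξ, ξ⟫) (hLu : ∀ x ∈ D, secondOrderOp a b u x ≤ 0)
    {p : F} (hp : p ∈ D) (hmin : IsMinOn u D p) : EqOn u (fun _ => u p) D := by
  obtain ⟨C, hC, hCD⟩ := continuousOn_iff_isClosed.mp hu.continuousOn {u p} isClosed_singleton
  have hmem {x : F} (hx : x ∈ D) : x ∈ C ↔ u x = u p := by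
    simpa [hx] using (Set.ext_iff.mp hCD x).symm
  suffices hDC : D ⊆ C from fun x hx => (hmem hx).mp (hDC hx)
  by_contra hDC
  obtain ⟨x₀, y, hne, hball, hcontact⟩ := exists_closedBall_subset_inter_eq_singleton hC hD hDc
    ⟨p, hp, (hmem hp).mpr rfl⟩ hDC
  have hx₀D : x₀ ∈ D := hball (mem_closedBall.mpr le_rfl)
  have hx₀ : u x₀ = u p := (hmem hx₀D).mp (hcontact.symm.subset rfl).1
  have hDx₀ : D ∈ 𝓝 x₀ := hD.mem_nhds hx₀D
  have hpositive : ∀ x ∈ D, (a x).IsPositive := fun x hx => by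
    refine (ContinuousLinearMap.isPositive_iff (a x)).mpr ⟨hsymm x hx, fun ξ => ?_⟩
    rcases eq_or_ne ξ 0 with rfl | hξ
    · simp
    · exact (hpos x hx ξ hξ).le
  obtain ⟨x, hx, hxne, hxeq⟩ := exists_ne_eq_of_isLocalMin_of_secondOrderOp_nonpos
    (hu.contDiffAt hDx₀) (hac.continuousAt hDx₀) (hbc.continuousAt hDx₀)
    (eventually_of_mem hDx₀ hpositive) (hpos x₀ hx₀D _ (sub_ne_zero.mpr hne.symm))
    (eventually_of_mem hDx₀ hLu) (eventually_of_mem hDx₀ fun x hx => hx₀.trans_le (hmin hx))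
  exact hxne (hcontact.subset ⟨(hmem (hball hx)).mpr (hxeq.trans hx₀), hx⟩)

end StrongMinimum

section Translator

variable {F : Type*} [NormedAddCommGroup F] [InnerProductSpace ℝ F]

/-- The principal coefficient `(1 + |p|²) I - p ⊗ p` of the translator operator at a point where
the gradient is `p`. -/
noncomputable def translatorPrincipal (p : F) : F →L[ℝ] F :=
  (1 + ‖p‖ ^ 2) • ContinuousLinearMap.id ℝ F - InnerProductSpace.rankOne ℝ p p

lemma isSymmetric_translatorPrincipal (p : F) : (translatorPrincipal p).IsSymmetric := fun ξ η => by
  simp [translatorPrincipal, inner_sub_left, inner_sub_right, real_inner_smul_left,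
    real_inner_smul_right, real_inner_comm p, mul_comm]

lemma inner_translatorPrincipal_pos (p : F) {ξ : F} (hξ : ξ ≠ 0) :
    0 < ⟪translatorPrincipal p ξ, ξ⟫ := by
  have hinner : ⟪translatorPrincipal p ξ, ξ⟫ = ‖ξ‖ ^ 2 + (‖p‖ ^ 2 * ‖ξ‖ ^ 2 - ⟪p, ξ⟫ ^ 2) := by
    simp only [translatorPrincipal, sub_apply, smul_apply, ContinuousLinearMap.id_apply,
      InnerProductSpace.rankOne_apply, inner_sub_left, real_inner_smul_left,
      real_inner_self_eq_norm_sq]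
    ring
  have hcauchy : ⟪p, ξ⟫ ^ 2 ≤ ‖p‖ ^ 2 * ‖ξ‖ ^ 2 := by
    rw [← mul_pow]
    exact sq_le_sq' (neg_le_of_abs_le (abs_real_inner_le_norm p ξ)) (real_inner_le_norm p ξ)
  have hnorm : 0 < ‖ξ‖ ^ 2 := by positivity
  linarith

lemma continuous_translatorPrincipal : Continuous (translatorPrincipal (F := F)) := by
  unfold translatorPrincipal
  simp only [InnerProductSpace.rankOne_def]
  fun_prop

variable [FiniteDimensional ℝ F]

/-- The translator operator: left side minus right side of the translator equation with velocity
`(v', vn)`. -/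
noncomputable def translatorOp (v' : F) (vn : ℝ) (f : F → ℝ) (x : F) : ℝ :=
  (1 + ‖∇ f x‖ ^ 2) * LinearMap.trace ℝ F (fderiv ℝ (∇ f) x) - ⟪∇ f x, fderiv ℝ (∇ f) x (∇ f x)⟫
    - (vn - ⟪v', ∇ f x⟫) * (1 + ‖∇ f x‖ ^ 2)

lemma translatorEqAt_iff_translatorOp_eq_zero {n : ℕ} {f : EuclideanSpace ℝ (Fin n) → ℝ}
    {v' : EuclideanSpace ℝ (Fin n)} {vn : ℝ} {x : EuclideanSpace ℝ (Fin n)} :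
    TranslatorEqAt f v' vn x ↔ translatorOp v' vn f x = 0 := by
  have hlap : lap f x = LinearMap.trace ℝ _ (fderiv ℝ (∇ f) x).toLinearMap := by
    rw [LinearMap.trace_eq_sum_inner _ (EuclideanSpace.basisFun (Fin n) ℝ)]
    exact Finset.sum_congr rfl fun i _ => by
      rw [EuclideanSpace.basisFun_apply, real_inner_comm, hess, ContinuousLinearMap.coe_coe]
  rw [TranslatorEqAt, translatorOp, hlap, hess, sub_eq_zero]

/-- The vector through which the translator operator with Hessian `A` depends on the gradient: its
increment from gradient `p` to gradient `q` is the inner product of this vector with `q - p`. -/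
noncomputable def translatorDrift (v' : F) (vn : ℝ) (A : F →L[ℝ] F) (p q : F) : F :=
  (LinearMap.trace ℝ F A - (vn - ⟪v', p⟫)) • (p + q) - A q - A.adjoint p + (1 + ‖q‖ ^ 2) • v'

lemma continuous_translatorDrift (v' : F) (vn : ℝ) :
    Continuous fun y : (F →L[ℝ] F) × F × F => translatorDrift v' vn y.1 y.2.1 y.2.2 := by
  have htrace : Continuous fun y : (F →L[ℝ] F) × F × F => LinearMap.trace ℝ F y.1 :=
    continuous_trace.comp continuous_fst
  have hadjoint : Continuous fun y : (F →L[ℝ] F) × F × F => y.1.adjoint :=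
    ContinuousLinearMap.adjoint.continuous.comp continuous_fst
  unfold translatorDrift
  fun_prop

lemma translatorOp_sub_translatorOp (v' : F) (vn : ℝ) {f₁ f₂ : F → ℝ} {x : F}
    (hf₁ : ContDiffAt ℝ 2 f₁ x) (hf₂ : ContDiffAt ℝ 2 f₂ x) :
    translatorOp v' vn f₂ x - translatorOp v' vn f₁ x =
      secondOrderOp (fun x => translatorPrincipal (∇ f₂ x))
        (fun x => translatorDrift v' vn (fderiv ℝ (∇ f₁) x) (∇ f₁ x) (∇ f₂ x))
        (fun x => f₂ x - f₁ x) x := by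
  rw [secondOrderOp, fderiv_gradient_fun_sub hf₂ hf₁,
    gradient_fun_sub (hf₂.differentiableAt two_ne_zero) (hf₁.differentiableAt two_ne_zero)]
  unfold translatorOp
  generalize fderiv ℝ (∇ f₁) x = A, fderiv ℝ (∇ f₂) x = B, ∇ f₁ x = p, ∇ f₂ x = q
  simp only [translatorPrincipal, translatorDrift, ContinuousLinearMap.sub_comp,
    ContinuousLinearMap.smul_comp, ContinuousLinearMap.id_comp, ContinuousLinearMap.comp_sub,
    InnerProductSpace.rankOne_comp, ContinuousLinearMap.toLinearMap_sub,
    ContinuousLinearMap.toLinearMap_smul, map_sub, map_smul, InnerProductSpace.trace_rankOne,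
    ContinuousLinearMap.adjoint_inner_left, inner_add_left, inner_sub_left, inner_sub_right,
    real_inner_smul_left, smul_eq_mul, ← real_inner_self_eq_norm_sq]
  rw [real_inner_comm q p, real_inner_comm q (A q), real_inner_comm p (A q)]
  ring

end Translator

theorem subsequent_singularities_stmt0_general {F : Type*} [NormedAddCommGroup F]
    [InnerProductSpace ℝ F] [FiniteDimensional ℝ F] {D : Set F} (hD : IsOpen D)
    (hDc : IsPreconnected D) (v' : F) (vn : ℝ) {f₁ f₂ : F → ℝ} (hf₁ : ContDiffOn ℝ 2 f₁ D)
    (hf₂ : ContDiffOn ℝ 2 f₂ D)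
    (hle : ∀ x ∈ D, translatorOp v' vn f₂ x ≤ translatorOp v' vn f₁ x)
    {p : F} (hp : p ∈ D) (hmin : ∀ x ∈ D, f₂ p - f₁ p ≤ f₂ x - f₁ x) :
    ∀ x ∈ D, f₂ x - f₁ x = f₂ p - f₁ p := by
  have hC₁ {x} (hx : x ∈ D) : ContDiffAt ℝ 2 f₁ x := hf₁.contDiffAt (hD.mem_nhds hx)
  have hC₂ {x} (hx : x ∈ D) : ContDiffAt ℝ 2 f₂ x := hf₂.contDiffAt (hD.mem_nhds hx)
  have hgrad₁ : ContinuousOn (∇ f₁) D := fun x hx =>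
    (differentiableAt_gradient (hC₁ hx)).continuousAt.continuousWithinAt
  have hgrad₂ : ContinuousOn (∇ f₂) D := fun x hx =>
    (differentiableAt_gradient (hC₂ hx)).continuousAt.continuousWithinAt
  have hhess₁ : ContinuousOn (fderiv ℝ (∇ f₁)) D := fun x hx =>
    ((contDiffAt_gradient (m := 1) (hC₁ hx) (by norm_num)).continuousAt_fderiv
      one_ne_zero).continuousWithinAt
  refine eqOn_of_isMinOn_of_secondOrderOp_nonpos hD hDc (hf₂.sub hf₁)
    (continuous_translatorPrincipal.comp_continuousOn hgrad₂)
    ((continuous_translatorDrift v' vn).comp_continuousOn (hhess₁.prodMk (hgrad₁.prodMk hgrad₂)))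
    (fun x _ => isSymmetric_translatorPrincipal _)
    (fun x _ ξ hξ => inner_translatorPrincipal_pos _ hξ) (fun x hx => ?_) hp hmin
  exact (translatorOp_sub_translatorOp v' vn (hC₁ hx) (hC₂ hx)).symm.trans_le
    (sub_nonpos.mpr (hle x hx))

/-- If `f₁, f₂` are smooth solutions of the translator equation with the same
velocity `v = (v', vn)` on a nonempty open connected set `D ⊆ ℝⁿ`, and `f₂ − f₁` attains its
infimum over `D` at a point of `D`, then `f₂ − f₁` is constant on `D`. -/
theorem subsequent_singularities_stmt0 {n : ℕ}
    (D : Set (EuclideanSpace ℝ (Fin n))) (hD : IsOpen D) (hDconn : IsConnected D)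
    (v' : EuclideanSpace ℝ (Fin n)) (vn : ℝ)
    (f₁ f₂ : EuclideanSpace ℝ (Fin n) → ℝ)
    (hf₁ : ContDiffOn ℝ (⊤ : ℕ∞) f₁ D) (hf₂ : ContDiffOn ℝ (⊤ : ℕ∞) f₂ D)
    (ht₁ : ∀ x ∈ D, TranslatorEqAt f₁ v' vn x)
    (ht₂ : ∀ x ∈ D, TranslatorEqAt f₂ v' vn x)
    (p : EuclideanSpace ℝ (Fin n)) (hp : p ∈ D)
    (hmin : ∀ x ∈ D, f₂ p - f₁ p ≤ f₂ x - f₁ x) :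
    ∀ x ∈ D, f₂ x - f₁ x = f₂ p - f₁ p := by
  refine subsequent_singularities_stmt0_general hD hDconn.isPreconnected v' vn
    (contDiffOn_infty.mp hf₁ 2) (contDiffOn_infty.mp hf₂ 2) (fun x hx => ?_) hp hmin
  rw [translatorEqAt_iff_translatorOp_eq_zero.mp (ht₁ x hx),
    translatorEqAt_iff_translatorOp_eq_zero.mp (ht₂ x hx)]
end

section
/- Let D ⊆ ℝⁿ be open, let f : D → ℝ, let p ∈ D, and suppose f is differentiable at p. Let μ > 0. If ‖(y, f(y)) − (p, f(p) + μ)‖ ≥ μ for every y ∈ D (Euclidean norm in ℝ^{n+1}), then the derivative of f at p is zero. -/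
/-!
Since `(p, f p)` is at distance exactly `μ` from `(p, f p + μ)`, the squared distance
`‖y - p‖ ^ 2 + (f y - (f p + μ)) ^ 2` has a local minimum at `y = p`. Its first summand vanishes to
second order there, so only the second one contributes to the derivative, which is therefore
`-2 μ • f'`. For vector-valued `f` the same argument, with a vector `ν` in place of `μ`, shows that
the range of `f'` is orthogonal to `ν`.
-/

open Topology

theorem isLocalMin_norm_sq_add_norm_sq_of_le_sqrt {E F : Type*} [SeminormedAddCommGroup E]
    [SeminormedAddCommGroup F] {D : Set E} {f : E → F} {p : E} {ν : F} (hD : D ∈ 𝓝 p)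
    (hdist : ∀ y ∈ D, ‖ν‖ ≤ √(‖y - p‖ ^ 2 + ‖f y - (f p + ν)‖ ^ 2)) :
    IsLocalMin (fun y => ‖y - p‖ ^ 2 + ‖f y - (f p + ν)‖ ^ 2) p := by
  filter_upwards [hD] with y hy
  calc
    ‖p - p‖ ^ 2 + ‖f p - (f p + ν)‖ ^ 2 = ‖ν‖ ^ 2 := by simp
    _ ≤ ‖y - p‖ ^ 2 + ‖f y - (f p + ν)‖ ^ 2 :=
      (Real.le_sqrt (norm_nonneg ν) (by positivity)).1 (hdist y hy)

section Derivative

variable {E F : Type*} [NormedAddCommGroup E] [NormedSpace ℝ E]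
  [NormedAddCommGroup F] [InnerProductSpace ℝ F]
  {f : E → F} {f' : E →L[ℝ] F} {p : E}

theorem hasFDerivAt_norm_sub_pow_self {n : ℕ} (hn : 1 < n) (p : E) :
    HasFDerivAt (fun y => ‖y - p‖ ^ n) (0 : E →L[ℝ] ℝ) p :=
  (Asymptotics.isBigO_refl (fun y => ‖y - p‖ ^ n) (𝓝 p)).hasFDerivAt hn

theorem inner_sub_hasFDerivAt_eq_zero_of_isLocalMin {q : F} (hf : HasFDerivAt f f' p)
    (hmin : IsLocalMin (fun y => ‖y - p‖ ^ 2 + ‖f y - q‖ ^ 2) p) (v : E) :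
    inner ℝ (f p - q) (f' v) = 0 := by
  have hderiv : HasFDerivAt (fun y => ‖y - p‖ ^ 2 + ‖f y - q‖ ^ 2)
      (0 + 2 • (innerSL ℝ (f p - q)).comp f') p :=
    (hasFDerivAt_norm_sub_pow_self one_lt_two p).add (hf.sub_const q).norm_sq
  simpa [inner_sub_left] using DFunLike.congr_fun (hmin.hasFDerivAt_eq_zero hderiv) v

theorem subsequent_singularities_stmt2_general {D : Set E} (hD : D ∈ 𝓝 p)
    (hf : HasFDerivAt f f' p) {ν : F}
    (hdist : ∀ y ∈ D, ‖ν‖ ≤ √(‖y - p‖ ^ 2 + ‖f y - (f p + ν)‖ ^ 2)) (v : E) :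
    inner ℝ ν (f' v) = 0 := by
  have hmin := isLocalMin_norm_sq_add_norm_sq_of_le_sqrt hD hdist
  simpa using inner_sub_hasFDerivAt_eq_zero_of_isLocalMin hf hmin v

end Derivative

/-- Let `D ⊆ ℝⁿ` be open, `f : D → ℝ` differentiable at `p ∈ D`, and `μ > 0`.
If the point `(p, f(p) + μ)` of `ℝ^{n+1}` lying at height `μ` above the graph point `(p, f(p))`
is at Euclidean distance at least `μ` from every point `(y, f(y))` of the graph of `f`, then the
derivative of `f` at `p` is zero. -/
theorem subsequent_singularities_stmt2 {n : ℕ}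
    (D : Set (EuclideanSpace ℝ (Fin n))) (hD : IsOpen D)
    (f : EuclideanSpace ℝ (Fin n) → ℝ)
    (p : EuclideanSpace ℝ (Fin n)) (hp : p ∈ D)
    (hdiff : DifferentiableAt ℝ f p)
    (μ : ℝ) (hμ : 0 < μ)
    (hdist : ∀ y ∈ D, μ ≤ Real.sqrt (‖y - p‖ ^ 2 + (f y - (f p + μ)) ^ 2)) :
    fderiv ℝ f p = 0 := by
  ext v
  simpa [hμ.ne'] using subsequent_singularities_stmt2_general (ν := μ) (hD.mem_nhds hp)
    hdiff.hasFDerivAt (by simpa [abs_of_pos hμ] using hdist) v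
end

section
/- Let D ⊆ ℝⁿ be open and connected, let f : D → ℝ be differentiable at every point of D, and let μ > 0. If ‖(x, f(x) + μ) − (y, f(y))‖ ≥ μ for all x, y ∈ D (Euclidean norm in ℝ^{n+1}), then f is constant on D. -/
/-!
Squaring the distance hypothesis bounds `2 * μ * |f x - f y|` by `‖x - y‖ ^ 2 + (f x - f y) ^ 2`.
Near a point of continuity the last term is absorbed into the left-hand side, so the increments of
`f` are quadratically small, which makes `f` differentiable there with zero derivative.
-/

open Filter Topology Asymptotics

theorem le_sqrt_sq_add_add_sub_sq_iff {μ : ℝ} (hμ : 0 < μ) (d a b : ℝ) :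
    μ ≤ √(d ^ 2 + (a + μ - b) ^ 2) ↔ 2 * μ * (b - a) ≤ d ^ 2 + (b - a) ^ 2 := by
  rw [Real.le_sqrt' hμ]
  constructor <;> intro h <;> linarith

theorem isBigO_of_mul_abs_le_add_sq {α : Type*} {l : Filter α} {g h : α → ℝ} {c : ℝ} (hc : 0 < c)
    (hg : Tendsto g l (𝓝 0)) (hgh : ∀ᶠ a in l, c * |g a| ≤ h a + g a ^ 2) : g =O[l] h := by
  have hsmall : ∀ᶠ a in l, |g a| < c / 2 := by
    simpa only [Real.norm_eq_abs] using hg.norm.eventually_lt_const (by simpa using half_pos hc)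
  refine IsBigO.of_bound (c / 2)⁻¹ ?_
  filter_upwards [hsmall, hgh] with a hsmall hgh
  have habsorb : g a ^ 2 ≤ c / 2 * |g a| := by
    rw [← sq_abs, sq]
    gcongr
  rw [Real.norm_eq_abs, Real.norm_eq_abs, le_inv_mul_iff₀ (half_pos hc)]
  linarith [le_abs_self (h a)]

theorem eq_of_isOpen_of_isPreconnected_of_isBigO_pow {E F : Type*} [NormedAddCommGroup E]
    [NormedSpace ℝ E] [NormedAddCommGroup F] [NormedSpace ℝ F] {D : Set E} (hD : IsOpen D)
    (hDconn : IsPreconnected D) {f : E → F} {k : ℕ} (hk : 1 < k)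
    (hf : ∀ x ∈ D, (fun y ↦ f y - f x) =O[𝓝 x] fun y ↦ ‖y - x‖ ^ k) :
    ∀ x ∈ D, ∀ y ∈ D, f x = f y := by
  have hderiv : ∀ x ∈ D, HasFDerivAt f (0 : E →L[ℝ] F) x := fun x hx ↦ by
    simpa only [sub_add_cancel] using ((hf x hx).hasFDerivAt (𝕜 := ℝ) hk).add_const (f x)
  exact fun x hx y hy ↦ hD.is_const_of_fderiv_eq_zero hDconn
    (fun z hz ↦ (hderiv z hz).differentiableAt.differentiableWithinAt)
    (fun z hz ↦ (hderiv z hz).fderiv) hx hy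

theorem subsequent_singularities_stmt3_general {E : Type*} [NormedAddCommGroup E] [NormedSpace ℝ E]
    {D : Set E} (hD : IsOpen D) (hDconn : IsPreconnected D) {f : E → ℝ} (hf : ContinuousOn f D)
    {μ : ℝ} (hμ : 0 < μ)
    (hdist : ∀ x ∈ D, ∀ y ∈ D, μ ≤ √(‖x - y‖ ^ 2 + (f x + μ - f y) ^ 2)) :
    ∀ x ∈ D, ∀ y ∈ D, f x = f y := by
  have hsub : ∀ x ∈ D, ∀ y ∈ D, 2 * μ * (f y - f x) ≤ ‖x - y‖ ^ 2 + (f y - f x) ^ 2 :=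
    fun x hx y hy ↦ (le_sqrt_sq_add_add_sub_sq_iff hμ _ _ _).1 (hdist x hx y hy)
  have habs : ∀ x ∈ D, ∀ y ∈ D, 2 * μ * |f y - f x| ≤ ‖y - x‖ ^ 2 + (f y - f x) ^ 2 := by
    intro x hx y hy
    rcases abs_choice (f y - f x) with h | h <;> rw [h]
    · simpa only [norm_sub_rev] using hsub x hx y hy
    · simpa only [neg_sub, sub_sq_comm] using hsub y hy x hx
  refine eq_of_isOpen_of_isPreconnected_of_isBigO_pow hD hDconn one_lt_two fun x hx ↦ ?_
  have hDx : D ∈ 𝓝 x := hD.mem_nhds hx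
  have hlim : Tendsto (fun y ↦ f y - f x) (𝓝 x) (𝓝 0) :=
    tendsto_sub_nhds_zero_iff.2 (hf.continuousAt hDx)
  exact isBigO_of_mul_abs_le_add_sq (mul_pos two_pos hμ) hlim (eventually_of_mem hDx (habs x hx))

/-- Let `D ⊆ ℝⁿ` be open and connected, `f : D → ℝ` differentiable at every
point of `D`, and `μ > 0`. If the upward vertical translate by `μ` of the graph of `f` stays at
Euclidean distance (in `ℝ^{n+1}`) at least `μ` from the graph of `f`, i.e.
`‖(x, f(x) + μ) − (y, f(y))‖ ≥ μ` for all `x, y ∈ D`, then `f` is constant on `D`. -/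
theorem subsequent_singularities_stmt3 {n : ℕ}
    (D : Set (EuclideanSpace ℝ (Fin n))) (hD : IsOpen D) (hDconn : IsConnected D)
    (f : EuclideanSpace ℝ (Fin n) → ℝ)
    (hdiff : ∀ x ∈ D, DifferentiableAt ℝ f x)
    (μ : ℝ) (hμ : 0 < μ)
    (hdist : ∀ x ∈ D, ∀ y ∈ D, μ ≤ Real.sqrt (‖x - y‖ ^ 2 + (f x + μ - f y) ^ 2)) :
    ∀ x ∈ D, ∀ y ∈ D, f x = f y := by
  exact subsequent_singularities_stmt3_general hD hDconn.isPreconnected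
    (fun x hx ↦ (hdiff x hx).continuousAt.continuousWithinAt) hμ hdist
end
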